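/- Let 𝔎 be the fraction field of the polynomial ring over ℚ in the 84 indeterminates P_{ij} (1 ≤ i ≤ 6, 1 ≤ j ≤ 14), and let I ⊆ 𝔎[a_1,a_2,a_3,a_4,b_1,b_2] be the ideal generated by the six entries of P·F, where P = (P_{ij}) and F is the column of the 14 polynomials listed in the context. Then HF_I(1) = 7 and HF_I(d) = 18 for every d ≥ 2; in particular dim_𝔎(𝔎[a_1,a_2,a_3,a_4,b_1,b_2]/I) = 18. -/

import Mathlib

/-!
Lower bound.  For one integral matrix `P₀` (`dataP`) the system `P₀·F = 0` has 18 explicit rational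
zeros (`dataZ`), each with invertible Jacobian.  By the surjective form of the inverse function
theorem these zeros persist for every real `P` near `P₀` (`eventually_exists_zeros`).  A
`𝔎`-linear relation modulo `I` between polynomials gives, after clearing denominators, a relation
between their values at these zeros for all `P` near `P₀`; so 18 polynomials whose values at the
18 zeros form an invertible matrix are independent modulo `I` (`linearIndependent_of_zeros`).
This applies to 18 monomials of degree at most 2, seven of which are `1, a₁, …, b₂`
(`basisMon_linearIndependent`).

Upper bound.  The equations are affine-linear in `a`: they read `B(b)·(1, a₁, …, a₄) = 0`, where the
`6 × 5` matrix `B` (`bMat`) is quadratic in `b`.  Hence the six maximal minors of `B` lie in `I`.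
A column operation shows that they have degree at most 6 in `b`.  Multiplying them by `1, b₁, b₂`
gives 18 relations of degree at most 7, and for generic `P` these can be solved for 18 of the 36
monomials of degree at most 7 (`det_relPoly_ne_zero`, checked at a sparse specialization).  The other
18 monomials have degree at most 5, so they span the subalgebra `𝔎[b]` of the quotient
(`aeval_mem_span_standard`).

It remains to see that `𝔎[b]` is the whole quotient.  Let `δ` be the `4 × 4` minor `minor4` of the
linear part in `a`.  By Cramer's rule `δ a_c ∈ 𝔎[b]`.  The 18 elements `δ ℓ^k` with `ℓ = b₁ + 3 b₂`
are independent by the lower bound argument, because `ℓ` separates the 18 zeros and `δ` vanishes at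
none of them; so they span `𝔎[b]`, and `δ` is invertible in `𝔎[b]`.  Thus `a_c ∈ 𝔎[b]`
(`span_standard_eq_top`).

The quotient therefore has dimension 18, with a basis of monomials of degree at most 2 that
includes `1` and the variables.  Rank–nullity for the residue map on polynomials of degree at most
`d` gives the Hilbert function (`hilbert_of_basisMon`).
-/

open MvPolynomial

set_option synthInstance.maxHeartbeats 1000000
set_option maxHeartbeats 1000000

/-- The field `𝔎 = ℚ(P₁₁,…,P₆,₁₄)`: the fraction field of the polynomial ring over `ℚ` in the
84 indeterminates `P_{ij}` (`i : Fin 6`, `j : Fin 14`). -/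
abbrev ParamField : Type := FractionRing (MvPolynomial (Fin 6 × Fin 14) ℚ)

/-- The 14 polynomials in `𝔎[a₁,a₂,a₃,a₄,b₁,b₂]` arising from plane conics in `ℂ³` through the
origin; the variables are `a₁ = X 0, a₂ = X 1, a₃ = X 2, a₄ = X 3, b₁ = X 4, b₂ = X 5`. -/
noncomputable def conicFK : Fin 14 → MvPolynomial (Fin 6) ParamField :=
  ![1, X 0, X 1, X 2, X 3,
    X 2 * X 4, X 2 * X 5, X 3 * X 4, X 3 * X 5,
    X 0 * X 4 - 2 * X 5, X 0 * X 5 - 2 * X 1 * X 4,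
    X 4 * (X 3 * X 4 - X 2 * X 5), X 5 * (X 3 * X 4 - X 2 * X 5),
    X 1 * X 4 ^ 2 - X 0 * X 4 * X 5 + X 5 ^ 2]

/-- The ideal `I ⊆ 𝔎[a₁,…,b₂]` generated by the six entries of `P·F`, where `P = (P_{ij})` is
the generic `6×14` matrix of indeterminates. -/
noncomputable def conicIdeal : Ideal (MvPolynomial (Fin 6) ParamField) :=
  Ideal.span (Set.range fun i : Fin 6 =>
    ∑ j : Fin 14,
      C (algebraMap (MvPolynomial (Fin 6 × Fin 14) ℚ) ParamField (X (i, j))) * conicFK j)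

/-! ### The system `P·F = 0` and the deformation of its zeros -/

/-- The list `F` of 14 conic polynomials, evaluated at a point `x = (a₁,a₂,a₃,a₄,b₁,b₂)` of an
arbitrary commutative ring. -/
def conicVec {S : Type*} [CommRing S] (x : Fin 6 → S) : Fin 14 → S :=
  ![1, x 0, x 1, x 2, x 3,
    x 2 * x 4, x 2 * x 5, x 3 * x 4, x 3 * x 5,
    x 0 * x 4 - 2 * x 5, x 0 * x 5 - 2 * x 1 * x 4,
    x 4 * (x 3 * x 4 - x 2 * x 5), x 5 * (x 3 * x 4 - x 2 * x 5),
    x 1 * x 4 ^ 2 - x 0 * x 4 * x 5 + x 5 ^ 2]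

/-- The partial derivatives of the entries of `F`, made homogeneous of degree 2 with an extra
variable `h`: entry `(m, j)` is `∂F_j/∂x_m`.  At `h = 1` these are the derivatives themselves. -/
def conicGrad {S : Type*} [CommRing S] (h : S) (x : Fin 6 → S) : Fin 6 → Fin 14 → S :=
  ![![0, h * h, 0, 0, 0, 0, 0, 0, 0, h * x 4, h * x 5, 0, 0, -(x 4 * x 5)],
    ![0, 0, h * h, 0, 0, 0, 0, 0, 0, 0, -(2 * h * x 4), 0, 0, x 4 * x 4],
    ![0, 0, 0, h * h, 0, h * x 4, h * x 5, 0, 0, 0, 0, -(x 4 * x 5), -(x 5 * x 5), 0],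
    ![0, 0, 0, 0, h * h, 0, 0, h * x 4, h * x 5, 0, 0, x 4 * x 4, x 4 * x 5, 0],
    ![0, 0, 0, 0, 0, h * x 2, 0, h * x 3, 0, h * x 0, -(2 * h * x 1),
      2 * x 3 * x 4 - x 2 * x 5, x 5 * x 3, 2 * x 1 * x 4 - x 0 * x 5],
    ![0, 0, 0, 0, 0, 0, h * x 2, 0, h * x 3, -(2 * h * h), h * x 0,
      -(x 2 * x 4), x 3 * x 4 - 2 * x 2 * x 5, 2 * h * x 5 - x 0 * x 4]]

/-- The (homogenized) Jacobian matrix of the system `P·F = 0` with respect to `x`. -/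
def conicJac {S : Type*} [CommRing S] (P : Fin 6 × Fin 14 → S) (h : S) (x : Fin 6 → S) :
    Matrix (Fin 6) (Fin 6) S :=
  Matrix.of fun i m => ∑ j, P (i, j) * conicGrad h x m j

/-- The six entries of `P·F` at the point `x`. -/
def conicSys {S : Type*} [CommRing S] (P : Fin 6 × Fin 14 → S) (x : Fin 6 → S) : Fin 6 → S :=
  fun i => ∑ j, P (i, j) * conicVec x j

theorem map_conicVec {S T : Type*} [CommRing S] [CommRing T] (φ : S →+* T) (x : Fin 6 → S)
    (j : Fin 14) : φ (conicVec x j) = conicVec (fun m => φ (x m)) j := by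
  fin_cases j <;> simp [conicVec, map_ofNat φ 2]

theorem hasDerivAt_conicVec (x v : Fin 6 → ℝ) (j : Fin 14) :
    HasDerivAt (fun t : ℝ => conicVec (fun m => x m + t * v m) j)
      (∑ m, conicGrad 1 x m j * v m) 0 := by
  have h (m : Fin 6) : HasDerivAt (fun t : ℝ => x m + t * v m) (v m) 0 := by
    simpa using ((hasDerivAt_id (0 : ℝ)).mul_const (v m)).const_add (x m)
  have h2 (m n : Fin 6) := (h m).mul (h n)
  fin_cases j <;> simp only [Fin.sum_univ_six]
  · exact (hasDerivAt_const (0 : ℝ) (1 : ℝ)).congr_deriv (by simp [conicGrad])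
  · exact (h 0).congr_deriv (by simp [conicGrad])
  · exact (h 1).congr_deriv (by simp [conicGrad])
  · exact (h 2).congr_deriv (by simp [conicGrad])
  · exact (h 3).congr_deriv (by simp [conicGrad])
  · exact (h2 2 4).congr_deriv (by simp [conicGrad]; ring)
  · exact (h2 2 5).congr_deriv (by simp [conicGrad]; ring)
  · exact (h2 3 4).congr_deriv (by simp [conicGrad]; ring)
  · exact (h2 3 5).congr_deriv (by simp [conicGrad]; ring)
  · exact ((h2 0 4).sub ((h 5).const_mul 2)).congr_deriv (by simp [conicGrad]; ring)
  · exact ((h2 0 5).sub (((h 1).const_mul 2).mul (h 4))).congr_deriv (by simp [conicGrad]; ring)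
  · exact ((h 4).mul ((h2 3 4).sub (h2 2 5))).congr_deriv (by simp [conicGrad]; ring)
  · exact ((h 5).mul ((h2 3 4).sub (h2 2 5))).congr_deriv (by simp [conicGrad]; ring)
  · exact ((((h 1).mul ((h 4).pow 2)).sub ((h2 0 4).mul (h 5))).add ((h 5).pow 2)).congr_deriv
      (by simp [conicGrad]; ring)

theorem contDiff_conicVec (j : Fin 14) :
    ContDiff ℝ 1 (fun x : Fin 6 → ℝ => conicVec x j) := by
  fin_cases j <;> simp only [conicVec] <;> simp <;> fun_prop

/-- Nondegenerate zeros of the system `P₀·F = 0` deform: if `y₀ k` (`k : ι`) are zeros with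
invertible Jacobian, then any property that holds near `(P₀, y₀)` holds, for each `P` near `P₀`,
at some tuple `y` of zeros of `P·F = 0`. -/
theorem eventually_exists_zeros {ι : Type*} [Fintype ι] (P₀ : Fin 6 × Fin 14 → ℝ)
    (y₀ : ι → Fin 6 → ℝ) (h0 : ∀ k, conicSys P₀ (y₀ k) = 0)
    (hJ : ∀ k, (conicJac P₀ 1 (y₀ k)).det ≠ 0)
    (good : (Fin 6 × Fin 14 → ℝ) × (ι → Fin 6 → ℝ) → Prop)
    (hgood : ∀ᶠ z in nhds (P₀, y₀), good z) :
    ∀ᶠ P in nhds P₀, ∃ y, good (P, y) ∧ ∀ k, conicSys P (y k) = 0 := by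
  classical
  let Φ : (Fin 6 × Fin 14 → ℝ) × (ι → Fin 6 → ℝ) →
      (Fin 6 × Fin 14 → ℝ) × (ι → Fin 6 → ℝ) :=
    fun z => (z.1, fun k => conicSys z.1 (z.2 k))
  have hΦ : ContDiff ℝ 1 Φ := by
    refine contDiff_fst.prodMk (contDiff_pi.2 fun k => contDiff_pi.2 fun i => ?_)
    refine ContDiff.sum fun j _ => ContDiff.mul (by fun_prop) ?_
    exact (contDiff_conicVec j).comp (by fun_prop)
  have hs : HasStrictFDerivAt Φ (fderiv ℝ Φ (P₀, y₀)) (P₀, y₀) :=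
    hΦ.contDiffAt.hasStrictFDerivAt one_ne_zero
  set D := fderiv ℝ Φ (P₀, y₀) with hD
  have hD1 (v) : (D v).1 = v.1 := by
    have h1 : HasFDerivAt (fun z => (Φ z).1) ((ContinuousLinearMap.fst ℝ _ _).comp D) (P₀, y₀) :=
      hasFDerivAt_fst.comp (P₀, y₀) hs.hasFDerivAt
    have h2 : HasFDerivAt (fun z => (Φ z).1) (ContinuousLinearMap.fst ℝ _ _) (P₀, y₀) :=
      hasFDerivAt_fst
    exact DFunLike.congr_fun (h1.unique h2) v
  have hD2 (v : ι → Fin 6 → ℝ) (k : ι) :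
      (D (0, v)).2 k = (conicJac P₀ 1 (y₀ k)).mulVec (v k) := by
    funext i
    let c : ℝ → (Fin 6 × Fin 14 → ℝ) × (ι → Fin 6 → ℝ) := fun t => (P₀, fun k m => y₀ k m + t * v k m)
    have hc0 : c 0 = (P₀, y₀) := by simp [c]
    have hc : HasDerivAt c (0, v) 0 := by
      refine (hasDerivAt_const _ _).prodMk ?_
      refine hasDerivAt_pi.2 fun k => hasDerivAt_pi.2 fun m => ?_
      simpa using ((hasDerivAt_id (0 : ℝ)).mul_const (v k m)).const_add (y₀ k m)
    have h1 : HasDerivAt (fun t => Φ (c t)) (D (0, v)) 0 := by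
      have hs' : HasFDerivAt Φ D (c 0) := by rw [hc0]; exact hs.hasFDerivAt
      exact hs'.comp_hasDerivAt 0 hc
    have h2 : HasDerivAt (fun t => (Φ (c t)).2 k i) ((D (0, v)).2 k i) 0 := by
      have h3 := hasDerivAt_pi.1 (hasDerivAt_pi.1 (hasFDerivAt_snd.comp_hasDerivAt 0 h1) k) i
      exact h3
    have h4 : HasDerivAt (fun t => (Φ (c t)).2 k i)
        (∑ j, P₀ (i, j) * ∑ m, conicGrad 1 (y₀ k) m j * v k m) 0 := by
      change HasDerivAt (fun t => ∑ j, P₀ (i, j) * conicVec (fun m => y₀ k m + t * v k m) j) _ 0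
      exact HasDerivAt.fun_sum fun j _ => (hasDerivAt_conicVec (y₀ k) (v k) j).const_mul _
    rw [h2.unique h4]
    simp only [Matrix.mulVec, dotProduct, conicJac, Matrix.of_apply, Finset.mul_sum,
      Finset.sum_mul]
    rw [Finset.sum_comm]
    exact Finset.sum_congr rfl fun _ _ => Finset.sum_congr rfl fun _ _ => by ring
  have hsurj : D.range = ⊤ := by
    refine LinearMap.range_eq_top.2 fun w => ?_
    let r := w.2 - (D (w.1, 0)).2
    let v : ι → Fin 6 → ℝ := fun k => (conicJac P₀ 1 (y₀ k))⁻¹.mulVec (r k)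
    refine ⟨(w.1, 0) + (0, v), ?_⟩
    have hv : (D (0, v)).2 = r := by
      funext k
      rw [hD2, Matrix.mulVec_mulVec, Matrix.mul_nonsing_inv _ (isUnit_iff_ne_zero.2 (hJ k)),
        Matrix.one_mulVec]
    refine Prod.ext ?_ ?_
    · simp [hD1]
    · change (D _).2 = _
      rw [map_add, Prod.snd_add, hv]
      simp [r]
  have hmap := hs.map_nhds_eq_of_surj hsurj
  have hΦ0 : Φ (P₀, y₀) = (P₀, 0) := Prod.ext rfl (funext h0)
  have himg : ∀ᶠ w in nhds (P₀, (0 : ι → Fin 6 → ℝ)), ∃ z, good z ∧ Φ z = w := by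
    rw [← hΦ0, ← hmap, Filter.eventually_map]
    filter_upwards [hgood] with z hz using ⟨z, hz, rfl⟩
  have hcont : Filter.Tendsto (fun P : Fin 6 × Fin 14 → ℝ => (P, (0 : ι → Fin 6 → ℝ)))
      (nhds P₀) (nhds (P₀, 0)) :=
    (Continuous.prodMk_left (0 : ι → Fin 6 → ℝ)).tendsto P₀
  filter_upwards [hcont.eventually himg] with P hP
  obtain ⟨⟨P', y⟩, hz, hzP⟩ := hP
  obtain rfl : P' = P := congrArg Prod.fst hzP
  exact ⟨y, hz, fun k => congrFun (congrArg Prod.snd hzP) k⟩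

/-! ### Independence modulo the generic ideal from one specialization -/

/-- The ring `ℚ[P_{ij}]` of which `ParamField` is the fraction field. -/
abbrev ParamRing : Type := MvPolynomial (Fin 6 × Fin 14) ℚ

/-- Evaluation of a polynomial in `ℚ[P][a,b]` at a real matrix `P` and a real point `x`. -/
noncomputable def evalAt (P : Fin 6 × Fin 14 → ℝ) (x : Fin 6 → ℝ) :
    MvPolynomial (Fin 6) ParamRing →+* ℝ :=
  eval₂Hom (aeval P : ParamRing →ₐ[ℚ] ℝ).toRingHom x

theorem evalAt_C (P : Fin 6 × Fin 14 → ℝ) (x : Fin 6 → ℝ) (r : ParamRing) :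
    evalAt P x (C r) = aeval P r := by
  simp [evalAt]

theorem evalAt_X (P : Fin 6 × Fin 14 → ℝ) (x : Fin 6 → ℝ) (m : Fin 6) :
    evalAt P x (X m) = x m := by
  simp [evalAt]

theorem continuous_evalAt (f : MvPolynomial (Fin 6) ParamRing) :
    Continuous fun z : (Fin 6 × Fin 14 → ℝ) × (Fin 6 → ℝ) => evalAt z.1 z.2 f := by
  induction f using MvPolynomial.induction_on with
  | C r =>
    simp only [evalAt_C]
    have h : Continuous fun P : Fin 6 × Fin 14 → ℝ => aeval P r := by
      induction r using MvPolynomial.induction_on with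
      | C q => simpa using continuous_const
      | add p q hp hq => simpa using hp.fun_add hq
      | mul_X p n hp => simpa using hp.fun_mul (continuous_apply n)
    exact h.comp continuous_fst
  | add p q hp hq => simpa using hp.fun_add hq
  | mul_X p n hp =>
    simp only [map_mul, evalAt_X]
    exact hp.mul ((continuous_apply n).comp continuous_snd)

/-- A rational polynomial vanishing on a neighbourhood of a real point is zero. -/
theorem eq_zero_of_eventually_aeval {r : ParamRing} {P₀ : Fin 6 × Fin 14 → ℝ}
    (h : ∀ᶠ P in nhds P₀, aeval P r = (0 : ℝ)) : r = 0 := by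
  obtain ⟨ε, hε, hball⟩ := Metric.eventually_nhds_iff_ball.1 h
  have hmap : MvPolynomial.map (algebraMap ℚ ℝ) r = 0 := by
    refine MvPolynomial.funext_set (fun n => Metric.ball (P₀ n) ε) (fun n => ?_) ?_
    · rw [Real.ball_eq_Ioo]
      exact Set.Ioo_infinite (by linarith)
    · intro P hP
      have := hball P (by rw [ball_pi _ hε]; exact hP)
      rw [eval_map, map_zero]
      rwa [aeval_def] at this
  exact map_injective _ (algebraMap ℚ ℝ).injective (by rw [hmap, map_zero])

/-- The ideal over `ℚ[P]` generated by the entries of `P·F`. -/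
noncomputable def conicIdealR : Ideal (MvPolynomial (Fin 6) ParamRing) :=
  Ideal.span (Set.range (conicSys (fun n => C (X n)) X))

theorem conicIdeal_eq_map :
    conicIdeal = conicIdealR.map
      (MvPolynomial.map (σ := Fin 6) (algebraMap ParamRing ParamField)) := by
  rw [conicIdealR, Ideal.map_span, ← Set.range_comp, conicIdeal]
  congr 1
  refine congrArg Set.range (funext fun i => ?_)
  simp only [Function.comp, conicSys, map_sum, map_mul, map_conicVec]
  refine Finset.sum_congr rfl fun j _ => ?_
  simp only [map_C, map_X]
  rfl

theorem evalAt_eq_zero_of_mem {P : Fin 6 × Fin 14 → ℝ} {x : Fin 6 → ℝ} (h : conicSys P x = 0)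
    {g : MvPolynomial (Fin 6) ParamRing} (hg : g ∈ conicIdealR) : evalAt P x g = 0 := by
  have hle : conicIdealR ≤ RingHom.ker (evalAt P x) := by
    rw [conicIdealR, Ideal.span_le]
    rintro _ ⟨i, rfl⟩
    rw [SetLike.mem_coe, RingHom.mem_ker]
    refine Eq.trans ?_ (congrFun h i)
    simp [conicSys, map_conicVec, evalAt_C, evalAt_X]
  exact hle hg

theorem smul_quotient_mk {σ k : Type*} [Field k] (I : Ideal (MvPolynomial σ k)) (a : k)
    (g : MvPolynomial σ k) : a • Ideal.Quotient.mk I g = Ideal.Quotient.mk I (C a * g) := by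
  rw [← smul_eq_C_mul]
  rfl

/-- Independence modulo the generic ideal can be tested at one real specialization `P₀`: it
suffices that the values of the `f i` at nondegenerate zeros `y₀ k` of `P₀·F` form an invertible
matrix.  A linear relation over `ℚ(P)` would, after clearing denominators, specialize to a
nontrivial relation between the columns of that matrix at every `P` near `P₀`. -/
theorem linearIndependent_of_zeros {ι : Type*} [Fintype ι] [DecidableEq ι]
    (P₀ : Fin 6 × Fin 14 → ℝ) (y₀ : ι → Fin 6 → ℝ) (h0 : ∀ k, conicSys P₀ (y₀ k) = 0)
    (hJ : ∀ k, (conicJac P₀ 1 (y₀ k)).det ≠ 0) (f : ι → MvPolynomial (Fin 6) ParamRing)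
    (hf : (Matrix.of fun k i => evalAt P₀ (y₀ k) (f i)).det ≠ 0) :
    LinearIndependent ParamField fun i =>
      Ideal.Quotient.mk conicIdeal (MvPolynomial.map (algebraMap ParamRing ParamField) (f i)) := by
  let _ : Algebra (MvPolynomial (Fin 6) ParamRing) (MvPolynomial (Fin 6) ParamField) :=
    algebraMvPolynomial
  rw [← LinearIndependent.iff_fractionRing ParamRing ParamField, Fintype.linearIndependent_iff]
  intro c hc
  have hmem : algebraMap (MvPolynomial (Fin 6) ParamRing) (MvPolynomial (Fin 6) ParamField)
      (∑ i, C (c i) * f i) ∈ conicIdealR.map (algebraMap _ _) := by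
    rw [algebraMap_def, ← conicIdeal_eq_map, ← Ideal.Quotient.eq_zero_iff_mem, ← hc, map_sum, map_sum]
    refine Finset.sum_congr rfl fun i _ => ?_
    rw [algebra_compatible_smul ParamField, smul_quotient_mk, map_mul, map_C]
  rw [IsLocalization.algebraMap_mem_map_algebraMap_iff
    ((nonZeroDivisors ParamRing).map (C (σ := Fin 6)))] at hmem
  obtain ⟨_, ⟨d, hd, rfl⟩, hdm⟩ := hmem
  have hd0 : d ≠ 0 := nonZeroDivisors.ne_zero hd
  have hopen : ∀ᶠ z : (Fin 6 × Fin 14 → ℝ) × (ι → Fin 6 → ℝ) in nhds (P₀, y₀),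
      (Matrix.of fun k i => evalAt z.1 (z.2 k) (f i)).det ≠ 0 := by
    refine ContinuousAt.eventually_ne (Continuous.continuousAt ?_) hf
    refine Continuous.matrix_det (continuous_matrix fun k i => ?_)
    have hk : Continuous fun z : (Fin 6 × Fin 14 → ℝ) × (ι → Fin 6 → ℝ) => (z.1, z.2 k) :=
      continuous_fst.prodMk ((continuous_apply k).comp continuous_snd)
    simpa only [Matrix.of_apply, Function.comp_def] using (continuous_evalAt (f i)).comp hk
  intro i
  have hdc : d * c i = 0 := by
    refine eq_zero_of_eventually_aeval (P₀ := P₀) ?_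
    filter_upwards [eventually_exists_zeros P₀ y₀ h0 hJ _ hopen] with P hP
    obtain ⟨y, hdet, hy⟩ := hP
    have hker : (Matrix.of fun k i => evalAt P (y k) (f i)).mulVec
        (fun i => aeval P (d * c i)) = 0 := by
      funext k
      have := evalAt_eq_zero_of_mem (hy k) hdm
      simp only [map_mul, map_sum, evalAt_C, Finset.mul_sum] at this
      simp only [Matrix.mulVec, dotProduct, Matrix.of_apply, Pi.zero_apply, map_mul]
      rw [← this]
      exact Finset.sum_congr rfl fun _ _ => by ring
    exact congrFun (Matrix.eq_zero_of_mulVec_eq_zero hdet hker) i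
  exact (mul_eq_zero.1 hdc).resolve_left hd0

/-! ### The specialization with 18 zeros and the matrix of the system in `a` -/

/-- An integral specialization `P₀` of the matrix `P` for which `P·F = 0` has 18 rational
zeros. -/
def dataP : Fin 6 → Fin 14 → ℤ :=
  ![![-4, 0, 0, 8, -4, -2, 4, -3, 0, 2, 0, 1, 0, -1],
    ![4736, 1184, 296, 580, 228, -1160, 1083, -524, 399, 1184, -296, 136, -119, 296],
    ![16, -8, 4, 1, -3, 1, 0, -2, -3, 4, 2, 1, 1, 1],
    ![400, -200, 100, 80, -40, -76, 48, 18, -14, -100, -50, 19, -7, 25],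
    ![4, 0, 0, 0, 0, 0, 0, 0, 0, -2, 0, 0, 0, 1],
    ![16, -8, 4, 0, 0, 0, 0, 0, 0, 4, 2, 0, 0, 1]]

/-- The 18 zeros of `P₀·F`, in homogeneous coordinates `(h, h a₁, h a₂, h a₃, h a₄, h b₁, h b₂)`. -/
def dataZ : Fin 18 → Fin 7 → ℤ :=
  ![![715, -2730, -9360, 20000, 30000, -143, -572],
    ![455, -546, 0, -800, 1200, -2275, 1820],
    ![6, 28, 22, 96, 32, 3, -9],
    ![21, -42, -168, -144, -288, -7, -14],
    ![7, -147, 630, 5, -135, 28, -182],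
    ![14, 21, 0, 10, 30, 56, 56],
    ![14, 0, -14, -37, -37, 56, 28],
    ![14, 63, 70, -37, -259, 56, 112],
    ![231, 266, 63, 80, 60, 2541, 1617],
    ![4301, 33762, 36720, 129472, 97104, 5819, -1012],
    ![55, 22, -264, 704, 528, -15, -80],
    ![2968, -15582, 10017, -18184, -9336, 11872, -14840],
    ![63980, 230664, 116172, 976000, 585600, 15995, -79975],
    ![4480, 20958, 22554, -3145, -28305, 17920, 44800],
    ![45, 166, 93, 752, 564, 15, -45],
    ![4, -16, -48, 0, 0, -1, -2],
    ![1, 1, 0, 0, 0, 6, 4],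
    ![5, 55, 120, 0, 0, -14, -52]]

/-- Inverses modulo 29 of the homogenized Jacobian matrices at the 18 zeros. -/
def dataJinv : Fin 18 → Fin 6 → Fin 6 → ℤ :=
  ![![![0, -8, -8, 0, -2, -12], ![0, 6, -2, 0, 6, 6], ![9, -8, -6, 8, 6, 0],
      ![-13, 5, 12, 12, -11, 8], ![0, 5, 6, 0, 13, -6], ![0, -5, -9, 0, -13, 9]],
    ![![-6, -1, 7, 0, -11, -9], ![10, -8, -7, 0, 10, 6], ![-9, -9, -10, 9, 14, -13],
      ![-2, 10, -9, 1, 7, 11], ![-10, 8, 5, 0, -10, 3], ![10, -8, -7, 0, 10, -1]],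
    ![![0, 0, 14, 3, 4, 6], ![0, 0, -2, 10, -8, -7], ![1, -3, -10, 7, 1, -7],
      ![8, -1, -2, 2, -6, 6], ![0, 0, -8, -7, -4, 8], ![0, 0, -11, 7, 4, 11]],
    ![![5, 0, 10, -12, -2, 13], ![-14, 0, -9, -7, 1, -10], ![-8, 6, 4, -7, 8, 11],
      ![8, 12, 8, 5, 11, 1], ![-13, 0, -7, 8, -13, -11], ![13, 0, -14, -8, 13, 3]],
    ![![3, 3, 11, 0, 9, 12], ![1, 2, -12, 0, -4, -10], ![2, 0, -14, -13, -10, 0],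
      ![1, 7, -10, 3, 2, 11], ![1, 0, 0, 0, 1, 0], ![-8, 4, 5, 0, -2, -5]],
    ![![-11, -8, 0, 0, 13, 1], ![-4, -8, 0, 0, -4, 11], ![12, 0, -8, -12, 3, -11],
      ![6, -9, -1, -7, 8, 6], ![9, 0, 0, 0, 9, 0], ![14, -1, 0, 0, 14, -6]],
    ![![-7, 0, 12, -10, 8, 3], ![-7, 0, 4, -13, 3, 11], ![4, -11, 10, 0, -14, -4],
      ![4, -11, -11, 9, 9, -12], ![-7, 0, 0, 0, -7, 0], ![-7, 0, -13, 6, -11, 13]],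
    ![![-14, 0, 0, 10, 0, 14], ![10, 0, 0, 4, 9, 4], ![-4, -4, -10, 0, -7, -2],
      ![2, 1, -5, -9, 10, 3], ![9, 0, 0, 0, 9, 0], ![-4, 0, 0, -6, -4, -13]],
    ![![13, -8, -14, -12, -2, 13], ![-10, 13, -2, 5, 6, 14], ![-12, -13, 4, -6, -12, -11],
      ![-10, 12, 11, 10, -10, -9], ![14, -14, 8, 8, -6, -13], ![-1, 4, -1, 6, 13, -10]],
    ![![4, 6, 6, -4, 7, -3], ![13, -2, 9, 11, 8, 14], ![13, 3, -9, 12, -3, -6],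
      ![7, -5, -12, 9, -5, 8], ![2, 10, -1, 3, -8, -2], ![-8, -7, 10, -5, -1, -5]],
    ![![-10, 0, -5, 0, 12, -11], ![10, 7, 4, 12, 3, -9], ![-9, 7, 1, -2, -1, -6],
      ![11, -2, -12, 13, -12, 1], ![7, 12, 8, 4, -11, -1], ![1, 9, -7, 3, 2, 5]],
    ![![-13, 0, -6, 0, -3, -5], ![-13, 0, 12, 0, 0, -11], ![-14, -4, -6, 14, 2, -13],
      ![11, -9, 3, -8, -10, 0], ![-12, 0, 0, 0, -12, 0], ![12, 0, -8, 0, 12, 8]],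
    ![![-14, 4, -13, 6, 13, 2], ![-13, 12, -10, -11, 2, 9], ![-5, 12, 2, 8, -12, -7],
      ![11, 13, -2, -1, -6, -5], ![0, 0, -2, 0, 12, 13], ![0, 0, -6, 0, -12, -5]],
    ![![13, -8, -14, -2, -5, -5], ![10, 5, -13, -6, 0, 13], ![-10, 8, 7, 8, 10, -12],
      ![-9, 14, 13, 14, 4, 1], ![-10, 0, 0, 0, -10, 0], ![-1, 0, 0, 0, -13, -10]],
    ![![3, 4, 3, -3, -2, 14], ![9, 12, 9, -9, 14, -12], ![11, 4, -11, -13, -5, -14],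
      ![8, 3, -11, 12, -4, 14], ![3, 0, -2, 0, 7, 3], ![9, 0, -6, 0, 12, 14]],
    ![![-3, 7, 1, 12, 7, 10], ![12, 14, 2, -14, 3, -10], ![-9, 0, 13, 0, -9, -13],
      ![7, 0, -3, 0, 7, 3], ![8, -12, -10, 7, -11, -6], ![12, 5, 9, -13, 3, 0]],
    ![![1, 3, 0, 5, -11, 12], ![1, 3, -7, 0, 1, -10], ![-14, 0, -9, 0, -14, 9],
      ![-14, 0, 13, 0, -14, -13], ![4, 12, -12, -1, 13, 9], ![4, 12, 1, 0, 4, -4]],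
    ![![12, 9, 9, 5, -10, -1], ![7, -2, -2, -14, 5, 8], ![0, 0, 10, 0, 0, -10],
      ![-9, 0, 8, 0, -9, -8], ![2, -9, -13, -4, -14, 12], ![6, 2, -10, -12, -6, 2]]]

/-- The 18 monomials `1, x_m, …` of degree at most two whose classes form a basis of the quotient,
written as products `x_4010 x_-2` with `x_-1 = 1`. -/
def basisPair : Fin 18 → Fin 7 × Fin 7 :=
  ![(0, 0), (0, 1), (0, 2), (0, 3), (0, 4), (0, 5), (0, 6), (1, 1), (1, 2), (1, 3), (1, 4), (1, 5),
    (1, 6), (2, 2), (2, 3), (2, 4), (2, 6), (3, 3)]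

/-- The inverse modulo 23 of the matrix of values of the basis monomials at the 18 zeros. -/
def dataVinv : Fin 18 → Fin 18 → ℤ :=
  ![![-4, 5, 5, -11, 8, 6, 9, -5, 11, 0, -4, -8, 0, 11, 0, -3, -5, 5],
    ![1, 0, -11, -10, 11, -6, 10, 9, 8, 11, 8, 2, 5, -11, -10, -7, -4, -5],
    ![3, -2, 9, -3, 8, 7, 3, -9, -5, -8, -4, -10, -11, 0, -9, 9, 5, -7],
    ![-4, 2, 3, 1, -9, 2, -10, 4, 1, -6, -5, -1, 9, 3, -10, 3, 8, 2],
    ![-7, 7, 1, -5, -11, 9, 1, -4, 1, -6, -10, 0, 0, -11, 8, 10, 11, -5],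
    ![2, 8, 6, 4, 7, -4, 6, -5, -5, 9, -3, -6, -4, -7, -8, -9, -2, -10],
    ![-10, 4, -11, 3, 11, 8, -2, -4, -7, -1, -6, -8, 11, -9, -9, 8, -7, 1],
    ![11, -4, 11, 9, 6, 5, 6, -9, -6, 9, -5, -5, 6, -8, -7, -2, -7, -9],
    ![1, 2, -10, -1, 0, 10, -6, -6, -7, -5, -3, -7, -3, 2, 3, -5, -1, 7],
    ![11, 3, -11, 11, -2, 1, -2, -8, -10, 7, 11, 6, -5, 10, 10, -5, -7, -2],
    ![-3, -1, -4, 7, -5, -2, 8, 1, -8, 11, -2, 7, 3, -2, 6, 1, -8, 7],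
    ![11, -8, -8, 0, -8, 4, 2, 7, 6, 7, -3, -2, 4, -10, 6, -3, 7, 1],
    ![0, -10, 7, -6, -10, 8, 1, 8, 8, -5, -2, -6, -8, 2, -1, -10, -2, 9],
    ![7, -8, 1, -11, -5, -11, 0, 8, -3, 11, -9, 1, 1, 1, -6, -7, 2, -9],
    ![3, -9, -3, 7, 8, 1, 3, 1, -6, -3, 3, 6, 0, -11, -7, 0, -9, 2],
    ![-9, -11, -8, -6, -10, 3, 0, -3, -3, 2, -6, -5, 1, 2, -11, -5, -2, 2],
    ![-7, 7, 8, 0, -9, -11, 10, -10, -4, 0, -4, -7, -7, -2, 3, -9, 1, 9],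
    ![-7, 4, 9, -8, 11, -3, 7, -2, 1, 5, -10, -2, -1, 8, 0, -7, -7, 0]]

/-- The coefficients of `∑ p_j F_j`, which is affine-linear in `a`, with respect to
`1, a₁, a₂, a₃, a₄`.  They are quadratic in `(s, t) = (b₁, b₂)` and are made homogeneous with an
extra variable `h`. -/
def bcoef {S : Type*} [CommRing S] (p : Fin 14 → S) (h s t : S) : Fin 5 → S :=
  ![p 0 * h ^ 2 - 2 * p 9 * h * t + p 13 * t ^ 2,
    p 1 * h ^ 2 + p 9 * h * s + p 10 * h * t - p 13 * s * t,
    p 2 * h ^ 2 - 2 * p 10 * h * s + p 13 * s ^ 2,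
    p 3 * h ^ 2 + p 5 * h * s + p 6 * h * t - p 11 * s * t - p 12 * t ^ 2,
    p 4 * h ^ 2 + p 7 * h * s + p 8 * h * t + p 11 * s ^ 2 + p 12 * s * t]

/-- The `6 × 5` matrix of the system `P·F = 0`, viewed as a linear system in `(1, a₁, …, a₄)`
with coefficients depending on `b = (s, t)`. -/
def bMat {S : Type*} [CommRing S] (P : Fin 6 × Fin 14 → S) (h s t : S) :
    Matrix (Fin 6) (Fin 5) S :=
  Matrix.of fun i c => bcoef (fun j => P (i, j)) h s t c

/-- The minor of `bMat` on the first four rows and the columns of `a₁, …, a₄`. -/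
def minor4 {S : Type*} [CommRing S] (P : Fin 6 × Fin 14 → S) (h s t : S) : S :=
  ((bMat P h s t).submatrix (Fin.castLE (by norm_num) : Fin 4 → Fin 6) Fin.succ).det

/-- The maximal minor of `bMat` obtained by deleting row `i`. -/
def minor5 {S : Type*} [CommRing S] (P : Fin 6 × Fin 14 → S) (s t : S) (i : Fin 6) : S :=
  ((bMat P 1 s t).submatrix i.succAbove id).det

theorem map_bcoef {S T : Type*} [CommRing S] [CommRing T] (φ : S →+* T) (p : Fin 14 → S)
    (h s t : S) (c : Fin 5) :
    φ (bcoef p h s t c) = bcoef (fun j => φ (p j)) (φ h) (φ s) (φ t) c := by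
  fin_cases c <;> simp [bcoef, map_ofNat φ 2]

theorem map_minor4 {S T : Type*} [CommRing S] [CommRing T] (φ : S →+* T)
    (P : Fin 6 × Fin 14 → S) (h s t : S) :
    φ (minor4 P h s t) = minor4 (fun n => φ (P n)) (φ h) (φ s) (φ t) := by
  rw [minor4, RingHom.map_det]
  congr 1
  ext i c
  simpa [bMat] using map_bcoef φ (fun j => P (Fin.castLE (by norm_num) i, j)) h s t c.succ

theorem map_minor5 {S T : Type*} [CommRing S] [CommRing T] (φ : S →+* T)
    (P : Fin 6 × Fin 14 → S) (s t : S) (i : Fin 6) :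
    φ (minor5 P s t i) = minor5 (fun n => φ (P n)) (φ s) (φ t) i := by
  rw [minor5, RingHom.map_det]
  congr 1
  ext r c
  simpa [bMat] using map_bcoef φ (fun j => P (i.succAbove r, j)) 1 s t c

/-- `∑ p_j F_j` is affine-linear in `a`, with coefficients `bcoef`. -/
theorem sum_conicVec {S : Type*} [CommRing S] (p : Fin 14 → S) (x : Fin 6 → S) :
    ∑ j, p j * conicVec x j =
      ∑ c, bcoef p 1 (x 4) (x 5) c * ![1, x 0, x 1, x 2, x 3] c := by
  simp [Fin.sum_univ_succ, conicVec, bcoef]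
  ring

theorem conicGrad_div {k : Type*} [Field k] (h : k) (hh : h ≠ 0) (x : Fin 6 → k) (m : Fin 6)
    (j : Fin 14) : h ^ 2 * conicGrad 1 (fun m => x m / h) m j = conicGrad h x m j := by
  fin_cases m <;> fin_cases j <;> simp [conicGrad] <;> field_simp

theorem bcoef_div {k : Type*} [Field k] (p : Fin 14 → k) (h s t : k) (hh : h ≠ 0) (c : Fin 5) :
    h ^ 2 * bcoef p 1 (s / h) (t / h) c = bcoef p h s t c := by
  fin_cases c <;> simp [bcoef] <;> field_simp

/-- An integer matrix with an inverse modulo `p > 1` is nonsingular over `ℝ`. -/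
theorem det_ne_zero_of_mod {n : ℕ} (p : ℕ) [Fact (1 < p)] (M N : Fin n → Fin n → ℤ)
    (h : ∀ i j, (∑ l, M i l * N l j) % p = if i = j then 1 else 0) :
    (Matrix.of fun i j => (M i j : ℝ)).det ≠ 0 := by
  have hp := Fact.out (p := 1 < p)
  have hmul : (Matrix.of M).map (Int.castRingHom (ZMod p)) *
      (Matrix.of N).map (Int.castRingHom (ZMod p)) = 1 := by
    ext i j
    rw [← Matrix.map_mul, Matrix.map_apply, Matrix.mul_apply]
    have h1 := h i j
    simp only [Matrix.of_apply]
    have h2 : (∑ l, M i l * N l j) % p = (if i = j then 1 else 0 : ℤ) % p := by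
      rw [h1]
      split_ifs
      · exact (Int.emod_eq_of_lt (by norm_num) (by exact_mod_cast hp)).symm
      · simp
    have h3 := (ZMod.intCast_eq_intCast_iff' _ _ p).2 h2
    rw [eq_intCast, h3, Matrix.one_apply]
    split_ifs <;> simp
  have hdet : (Matrix.of M).det ≠ 0 := by
    intro h0
    have h4 := congrArg Matrix.det hmul
    rw [Matrix.det_mul, ← RingHom.mapMatrix_apply, ← RingHom.map_det, h0, map_zero, zero_mul,
      Matrix.det_one] at h4
    exact zero_ne_one h4
  have h5 : (Matrix.of fun i j => (M i j : ℝ)) = (Int.castRingHom ℝ).mapMatrix (Matrix.of M) := by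
    ext i j
    simp
  rw [h5, ← RingHom.map_det]
  simpa using hdet

/-- The homogenized system: entry `i` is the `i`-th entry of `P₀·F`, made homogeneous of degree 3,
at the `k`-th zero. -/
def dataSys (k : Fin 18) (i : Fin 6) : ℤ :=
  ∑ c, bcoef (dataP i) (dataZ k 0) (dataZ k 5) (dataZ k 6) c *
    ![dataZ k 0, dataZ k 1, dataZ k 2, dataZ k 3, dataZ k 4] c

theorem dataZ_zero_ne : ∀ k, dataZ k 0 ≠ 0 := by decide +kernel

theorem dataSys_eq_zero : ∀ k i, dataSys k i = 0 := by decide +kernel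

theorem dataJac_mod : ∀ k i j, (∑ l, conicJac (fun n => dataP n.1 n.2) (dataZ k 0)
    (fun m => dataZ k m.succ) i l * dataJinv k l j) % (29 : ℕ) = if i = j then 1 else 0 := by
  decide +kernel

theorem dataV_mod : ∀ i j, (∑ l, (dataZ i (basisPair l).1 * dataZ i (basisPair l).2) *
    dataVinv l j) % (23 : ℕ) = if i = j then 1 else 0 := by
  decide +kernel

theorem dataMinor_ne_zero : ∀ k, minor4 (fun n => dataP n.1 n.2) (dataZ k 0) (dataZ k 5)
    (dataZ k 6) ≠ 0 := by
  decide +kernel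

theorem dataLin_injective : ∀ k l, (dataZ k 5 + 3 * dataZ k 6) * dataZ l 0 =
    (dataZ l 5 + 3 * dataZ l 6) * dataZ k 0 → k = l := by
  decide +kernel

/-! ### The lower bound -/

/-- The specialization `P₀`, as a real matrix. -/
noncomputable def realP : Fin 6 × Fin 14 → ℝ := fun n => dataP n.1 n.2

/-- The 18 zeros of `P₀·F`, as points of `ℝ⁶`. -/
noncomputable def realY (k : Fin 18) : Fin 6 → ℝ := fun m => dataZ k m.succ / dataZ k 0

theorem dataZ_cast_ne (k : Fin 18) : (dataZ k 0 : ℝ) ≠ 0 := by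
  exact_mod_cast dataZ_zero_ne k

theorem conicSys_realY (k : Fin 18) : conicSys realP (realY k) = 0 := by
  funext i
  have hh := dataZ_cast_ne k
  have h1 : ((dataSys k i : ℤ) : ℝ) = 0 := by rw [dataSys_eq_zero]; simp
  have hb (c : Fin 5) : ((bcoef (dataP i) (dataZ k 0) (dataZ k 5) (dataZ k 6) c : ℤ) : ℝ) =
      (dataZ k 0 : ℝ) ^ 2 * bcoef (fun j => realP (i, j)) 1 (realY k 4) (realY k 5) c := by
    rw [← eq_intCast (Int.castRingHom ℝ), map_bcoef]
    exact (bcoef_div _ _ _ _ hh c).symm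
  have h2 : ((dataSys k i : ℤ) : ℝ) =
      (dataZ k 0 : ℝ) ^ 3 * conicSys realP (realY k) i := by
    have hz (m : Fin 6) : (dataZ k m.succ : ℝ) = dataZ k 0 * realY k m := by
      rw [realY]
      field_simp
    rw [conicSys, sum_conicVec, dataSys]
    push_cast
    simp only [Fin.sum_univ_five, hb]
    have e0 := hz 0
    have e1 := hz 1
    have e2 := hz 2
    have e3 := hz 3
    simp at e0 e1 e2 e3 ⊢
    rw [e0, e1, e2, e3]
    ring
  rw [h1] at h2
  exact (mul_eq_zero.1 h2.symm).resolve_left (pow_ne_zero 3 hh)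

theorem conicJac_realY (k : Fin 18) : (conicJac realP 1 (realY k)).det ≠ 0 := by
  have hh := dataZ_cast_ne k
  have : Fact (1 < 29) := ⟨by norm_num⟩
  have h := det_ne_zero_of_mod 29 _ _ (dataJac_mod k)
  have hE : (Matrix.of fun i j => ((conicJac (fun n => dataP n.1 n.2) (dataZ k 0)
      (fun m => dataZ k m.succ) i j : ℤ) : ℝ)) =
      (dataZ k 0 : ℝ) ^ 2 • conicJac realP 1 (realY k) := by
    ext i m
    simp only [Matrix.of_apply, Matrix.smul_apply, smul_eq_mul, conicJac, Finset.mul_sum]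
    push_cast
    refine Finset.sum_congr rfl fun j _ => ?_
    have h1 : ((conicGrad (dataZ k 0) (fun m => dataZ k m.succ) m j : ℤ) : ℝ) =
        conicGrad (dataZ k 0 : ℝ) (fun m => (dataZ k m.succ : ℝ)) m j := by
      fin_cases m <;> fin_cases j <;> simp [conicGrad]
    rw [h1, ← conicGrad_div _ hh]
    simp only [realP]
    change _ = _ * (_ * conicGrad 1 (fun m => (dataZ k m.succ : ℝ) / dataZ k 0) m j)
    ring
  rw [hE, Matrix.det_smul] at h
  exact right_ne_zero_of_mul h

/-- The `l`-th basis monomial, of degree at most two. -/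
noncomputable def basisMon (S : Type*) [CommRing S] (l : Fin 18) : MvPolynomial (Fin 6) S :=
  (Fin.cons 1 X : Fin 7 → MvPolynomial (Fin 6) S) (basisPair l).1 *
    (Fin.cons 1 X : Fin 7 → MvPolynomial (Fin 6) S) (basisPair l).2

theorem map_basisMon {S T : Type*} [CommRing S] [CommRing T] (φ : S →+* T) (l : Fin 18) :
    MvPolynomial.map φ (basisMon S l) = basisMon T l := by
  have h (i : Fin 7) : MvPolynomial.map φ ((Fin.cons 1 X : Fin 7 → MvPolynomial (Fin 6) S) i) =
      (Fin.cons 1 X : Fin 7 → MvPolynomial (Fin 6) T) i := by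
    refine Fin.cases ?_ (fun m => ?_) i <;> simp
  rw [basisMon, map_mul, h, h, basisMon]

theorem basisMon_linearIndependent :
    LinearIndependent ParamField fun l =>
      Ideal.Quotient.mk conicIdeal (basisMon ParamField l) := by
  simp only [← map_basisMon (algebraMap ParamRing ParamField)]
  refine linearIndependent_of_zeros realP realY conicSys_realY conicJac_realY _ ?_
  have : Fact (1 < 23) := ⟨by norm_num⟩
  have h := det_ne_zero_of_mod 23 _ _ dataV_mod
  have hE : (Matrix.of fun i j => ((dataZ i (basisPair j).1 * dataZ i (basisPair j).2 : ℤ) : ℝ)) =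
      Matrix.of fun k l => (dataZ k 0 : ℝ) ^ 2 *
        (Matrix.of fun k l => evalAt realP (realY k) (basisMon ParamRing l)) k l := by
    ext k l
    have hh := dataZ_cast_ne k
    have h1 (i : Fin 7) : (dataZ k i : ℝ) = dataZ k 0 *
        evalAt realP (realY k) ((Fin.cons 1 X : Fin 7 → MvPolynomial (Fin 6) ParamRing) i) := by
      refine Fin.cases ?_ (fun m => ?_) i
      · simp
      · rw [Fin.cons_succ, evalAt_X, realY]
        field_simp
    simp only [Matrix.of_apply, basisMon, map_mul]
    push_cast
    rw [h1 (basisPair l).1, h1 (basisPair l).2]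
    ring
  rw [hE, Matrix.det_mul_column] at h
  exact right_ne_zero_of_mul h

/-- The 18 elements `δ ℓ^k`, where `δ` is the minor `minor4` and `ℓ = b₁ + 3 b₂`, are linearly
independent in the quotient, because `ℓ` separates the 18 zeros and `δ` vanishes at none of
them. -/
theorem minor4_mul_pow_linearIndependent :
    LinearIndependent ParamField fun k : Fin 18 =>
      Ideal.Quotient.mk conicIdeal
        (minor4 (fun n => C (algebraMap ParamRing ParamField (X n))) 1 (X 4) (X 5) *
          (X 4 + 3 * X 5) ^ (k : ℕ)) := by
  let f : Fin 18 → MvPolynomial (Fin 6) ParamRing := fun k =>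
    minor4 (fun n => C (X n : ParamRing)) 1 (X 4) (X 5) * (X 4 + 3 * X 5) ^ (k : ℕ)
  have hmap (k : Fin 18) : MvPolynomial.map (algebraMap ParamRing ParamField) (f k) =
      minor4 (fun n => C (algebraMap ParamRing ParamField (X n))) 1 (X 4) (X 5) *
          (X 4 + 3 * X 5) ^ (k : ℕ) := by
    simp only [f, map_mul, map_pow, map_add, map_minor4, map_C, map_X, map_one, map_ofNat]
  simp only [← hmap]
  refine linearIndependent_of_zeros realP realY conicSys_realY conicJac_realY f ?_
  have hE : (Matrix.of fun k i => evalAt realP (realY k) (f i)) =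
      Matrix.of fun k i => minor4 realP 1 (realY k 4) (realY k 5) *
        Matrix.vandermonde (fun k => realY k 4 + 3 * realY k 5) k i := by
    ext k i
    simp only [Matrix.of_apply, f, map_mul, map_pow, map_add, map_minor4, evalAt_X, evalAt_C,
      map_one, map_ofNat, aeval_X, Matrix.vandermonde_apply]
  rw [hE, Matrix.det_mul_column]
  refine mul_ne_zero (Finset.prod_ne_zero_iff.2 fun k _ => ?_)
    (Matrix.det_vandermonde_ne_zero_iff.2 fun k l hkl => ?_)
  · have hh := dataZ_cast_ne k
    have h1 : ((minor4 (fun n => dataP n.1 n.2) (dataZ k 0) (dataZ k 5) (dataZ k 6) : ℤ) : ℝ) ≠ 0 :=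
      Int.cast_ne_zero.2 (dataMinor_ne_zero k)
    rw [← eq_intCast (Int.castRingHom ℝ), map_minor4] at h1
    have h2 : minor4 realP (dataZ k 0 : ℝ) (dataZ k 5) (dataZ k 6) =
        ((dataZ k 0 : ℝ) ^ 2) ^ 4 * minor4 realP 1 (realY k 4) (realY k 5) := by
      have := Matrix.det_smul ((bMat realP 1 (realY k 4) (realY k 5)).submatrix
        (Fin.castLE (by norm_num) : Fin 4 → Fin 6) Fin.succ) ((dataZ k 0 : ℝ) ^ 2)
      rw [Fintype.card_fin] at this
      rw [minor4, minor4, ← this]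
      congr 1
      ext i c
      simp only [bMat, Matrix.submatrix_apply, Matrix.of_apply, Matrix.smul_apply, smul_eq_mul]
      exact (bcoef_div (fun j => realP (Fin.castLE (by norm_num) i, j)) _ _ _ hh
        c.succ).symm
    intro h0
    rw [h0, mul_zero] at h2
    exact h1 h2
  · refine dataLin_injective k l ?_
    have hk := dataZ_cast_ne k
    have hl := dataZ_cast_ne l
    have h1 : ((dataZ k 5 : ℝ) / dataZ k 0) + 3 * (dataZ k 6 / dataZ k 0) =
      ((dataZ l 5 : ℝ) / dataZ l 0) + 3 * (dataZ l 6 / dataZ l 0) := hkl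
    field_simp at h1
    have h2 : ((dataZ k 5 : ℝ) + 3 * dataZ k 6) * dataZ l 0 =
      (dataZ l 5 + 3 * dataZ l 6) * dataZ k 0 := by linarith
    exact_mod_cast h2

/-! ### Relations between `b₁` and `b₂` -/

/-- The exponent of the monomial `b₁^a b₂^b`. -/
noncomputable def expo (a : ℕ × ℕ) : Fin 2 →₀ ℕ :=
  Finsupp.single 0 a.1 + Finsupp.single 1 a.2

theorem expo_apply_zero (a : ℕ × ℕ) : expo a 0 = a.1 := by simp [expo]

theorem expo_apply_one (a : ℕ × ℕ) : expo a 1 = a.2 := by simp [expo]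

theorem expo_injective : Function.Injective expo := by
  intro a b h
  refine Prod.ext ?_ ?_
  · simpa [expo] using DFunLike.congr_fun h 0
  · simpa [expo] using DFunLike.congr_fun h 1

theorem expo_self (e : Fin 2 →₀ ℕ) : expo (e 0, e 1) = e := by
  ext i
  fin_cases i <;> simp [expo]

/-- The 18 monomials in `b` that are eliminated with the help of the relations. -/
def pivot : Fin 18 → ℕ × ℕ :=
  ![(5, 1), (6, 1), (5, 2), (3, 3), (4, 3), (3, 4), (1, 5), (2, 5), (1, 6), (7, 0), (4, 2), (3, 2),
    (2, 4), (0, 7), (6, 0), (4, 1), (5, 0), (0, 6)]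

/-- The remaining 18 monomials in `b` of degree at most 7; all have degree at most 5. -/
def standard : Fin 18 → ℕ × ℕ :=
  ![(0, 0), (1, 0), (0, 1), (2, 0), (1, 1), (0, 2), (3, 0), (2, 1), (1, 2), (0, 3), (4, 0), (3, 1),
    (2, 2), (1, 3), (0, 4), (2, 3), (1, 4), (0, 5)]

theorem pivot_or_standard : ∀ a : Fin 8, ∀ b : Fin 8, (a : ℕ) + b ≤ 7 →
    (∃ p, pivot p = (a.val, b.val)) ∨ ∃ q, standard q = (a.val, b.val) := by
  decide +kernel

theorem pivot_injective : Function.Injective pivot := by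
  unfold Function.Injective
  decide +kernel

theorem standard_degree : ∀ q, (standard q).1 + (standard q).2 ≤ 5 := by decide +kernel

/-- If 18 relations of degree at most 7 between `β 0` and `β 1` can be solved for the pivot
monomials, then the standard monomials span the subalgebra generated by `β 0` and `β 1`. -/
theorem aeval_mem_span_standard {k A : Type*} [Field k] [CommRing A] [Algebra k A]
    (β : Fin 2 → A) (rel : Fin 18 → MvPolynomial (Fin 2) k)
    (hdeg : ∀ r, (rel r).totalDegree ≤ 7) (hrel : ∀ r, aeval β (rel r) = 0)
    (hdet : (Matrix.of fun r p => coeff (expo (pivot p)) (rel r)).det ≠ 0)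
    (g : MvPolynomial (Fin 2) k) :
    aeval β g ∈ Submodule.span k
      (Set.range fun q => β 0 ^ (standard q).1 * β 1 ^ (standard q).2) := by
  classical
  set S := Submodule.span k (Set.range fun q => β 0 ^ (standard q).1 * β 1 ^ (standard q).2)
    with hS
  set A₀ : Matrix (Fin 18) (Fin 18) k := Matrix.of fun r p => coeff (expo (pivot p)) (rel r)
    with hA₀
  have hstd (q : Fin 18) : β 0 ^ (standard q).1 * β 1 ^ (standard q).2 ∈ S :=
    Submodule.subset_span ⟨q, rfl⟩
  -- Modulo `S`, the relations become a nonsingular linear system for the pivot monomials.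
  have hsys (r : Fin 18) :
      ∑ p, A₀ r p • S.mkQ (β 0 ^ (pivot p).1 * β 1 ^ (pivot p).2) = 0 := by
    have h1 : ∑ e ∈ (rel r).support, coeff e (rel r) • S.mkQ (β 0 ^ e 0 * β 1 ^ e 1) = 0 := by
      have h2 := congrArg S.mkQ (hrel r)
      rw [aeval_def, eval₂_eq', map_zero, map_sum] at h2
      rw [← h2]
      refine Finset.sum_congr rfl fun e _ => ?_
      rw [Fin.prod_univ_two, ← Algebra.smul_def, map_smul]
    rw [← h1]
    have h3 : ∑ p, A₀ r p • S.mkQ (β 0 ^ (pivot p).1 * β 1 ^ (pivot p).2) =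
        ∑ e ∈ Finset.univ.image (fun p => expo (pivot p)),
          coeff e (rel r) • S.mkQ (β 0 ^ e 0 * β 1 ^ e 1) := by
      rw [Finset.sum_image fun p _ q _ h => pivot_injective (expo_injective h)]
      refine Finset.sum_congr rfl fun p _ => ?_
      rw [expo_apply_zero, expo_apply_one, hA₀, Matrix.of_apply]
    rw [h3, Finset.sum_subset (Finset.subset_union_left (s₂ := (rel r).support)),
      Finset.sum_subset (Finset.subset_union_right
        (s₁ := Finset.univ.image (fun p => expo (pivot p))) (s₂ := (rel r).support))]
    · intro e _ he
      rw [notMem_support_iff.1 he, zero_smul]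
    · intro e he hne
      have hes : e ∈ (rel r).support := (Finset.mem_union.1 he).resolve_left hne
      have hle : e 0 + e 1 ≤ 7 := by
        have := (le_totalDegree hes).trans (hdeg r)
        rwa [Finsupp.sum_fintype _ _ (fun _ => rfl), Fin.sum_univ_two] at this
      rcases pivot_or_standard ⟨e 0, by omega⟩ ⟨e 1, by omega⟩ hle with ⟨p, hp⟩ | ⟨q, hq⟩
      · refine absurd (Finset.mem_image.2 ⟨p, Finset.mem_univ _, ?_⟩) hne
        rw [hp]
        exact expo_self e
      · have h4 := hstd q
        rw [hq] at h4
        rw [Submodule.mkQ_apply, (Submodule.Quotient.mk_eq_zero S).2 h4, smul_zero]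
  have hpivot (p : Fin 18) : β 0 ^ (pivot p).1 * β 1 ^ (pivot p).2 ∈ S := by
    rw [← Submodule.Quotient.mk_eq_zero S, ← Submodule.mkQ_apply]
    have h1 : ∑ r, A₀⁻¹ p r • ∑ q, A₀ r q • S.mkQ (β 0 ^ (pivot q).1 * β 1 ^ (pivot q).2) = 0 := by
      simp only [hsys, smul_zero, Finset.sum_const_zero]
    simp only [Finset.smul_sum, smul_smul] at h1
    rw [Finset.sum_comm] at h1
    simp only [← Finset.sum_smul, ← Matrix.mul_apply] at h1
    rw [Matrix.nonsing_inv_mul _ (isUnit_iff_ne_zero.2 hdet)] at h1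
    simpa [Matrix.one_apply] using h1
  have hlow (a b : ℕ) (hab : a + b ≤ 7) : β 0 ^ a * β 1 ^ b ∈ S := by
    rcases pivot_or_standard ⟨a, by omega⟩ ⟨b, by omega⟩ hab with ⟨p, hp⟩ | ⟨q, hq⟩
    · have := hpivot p
      rwa [hp] at this
    · have := hstd q
      rwa [hq] at this
  have hstable (i : Fin 2) (x : A) (hx : x ∈ S) : x * β i ∈ S := by
    have hle : S ≤ S.comap (LinearMap.mulRight k (β i)) := by
      rw [hS, Submodule.span_le]
      rintro _ ⟨q, rfl⟩
      have hq := standard_degree q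
      rw [SetLike.mem_coe, Submodule.mem_comap, LinearMap.mulRight_apply]
      fin_cases i
      · have := hlow ((standard q).1 + 1) (standard q).2 (by omega)
        rw [pow_succ] at this
        simpa [mul_right_comm] using this
      · have := hlow (standard q).1 ((standard q).2 + 1) (by omega)
        rw [pow_succ, ← mul_assoc] at this
        simpa using this
    exact hle hx
  induction g using MvPolynomial.induction_on with
  | C a =>
    rw [aeval_C, Algebra.algebraMap_eq_smul_one]
    refine S.smul_mem a ?_
    simpa using hlow 0 0 (by norm_num)
  | add p q hp hq => rw [map_add]; exact S.add_mem hp hq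
  | mul_X p i hp => rw [map_mul, aeval_X]; exact hstable i _ hp

theorem totalDegree_det_le {σ R : Type*} [CommRing R] {n d : ℕ}
    (M : Matrix (Fin n) (Fin n) (MvPolynomial σ R)) (h : ∀ i j, (M i j).totalDegree ≤ d) :
    M.det.totalDegree ≤ n * d := by
  rw [Matrix.det_apply]
  refine totalDegree_finsetSum_le fun τ _ => ?_
  have h1 : (∏ i, M (τ i) i).totalDegree ≤ n * d := by
    refine (totalDegree_finsetProd _ _).trans ?_
    refine (Finset.sum_le_card_nsmul _ _ d fun i _ => h _ _).trans ?_
    simp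
  rcases Int.units_eq_one_or (Equiv.Perm.sign τ) with hs | hs <;> rw [hs] <;> simpa using h1

/-- A matrix of determinant `s⁴` such that, by cancellation, the entries of `bMat * colMat` still
have degree at most 2 in `(s, t)`. -/
def colMat {S : Type*} [CommRing S] (s t : S) : Matrix (Fin 5) (Fin 5) S :=
  !![s ^ 2, 0, 0, 0, 0; 2 * s * t, s, 0, 0, 0; t ^ 2, t, 1, 0, 0; 0, 0, 0, s, 0; 0, 0, 0, t, 1]

theorem det_colMat {S : Type*} [CommRing S] (s t : S) : (colMat s t).det = s ^ 4 := by
  rw [Matrix.det_of_isLowerTriangular]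
  · simp [colMat, Fin.prod_univ_five]
    ring
  · intro i j hij
    have hij' : i < j := hij
    fin_cases i <;> fin_cases j <;> first | rfl | exact absurd hij' (by decide)

theorem bcoef_mul_colMat {S : Type*} [CommRing S] (p : Fin 14 → S) (s t : S) (c : Fin 5) :
    ∑ l, bcoef p 1 s t l * colMat s t l c =
      ![p 0 * s ^ 2 + 2 * p 1 * s * t + p 2 * t ^ 2,
        p 1 * s + p 2 * t + p 9 * s ^ 2 - p 10 * s * t,
        p 2 - 2 * p 10 * s + p 13 * s ^ 2,
        p 3 * s + p 4 * t + p 5 * s ^ 2 + p 6 * s * t + p 7 * s * t + p 8 * t ^ 2,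
        p 4 + p 7 * s + p 8 * t + p 11 * s ^ 2 + p 12 * s * t] c := by
  fin_cases c <;> simp [Fin.sum_univ_five, bcoef, colMat] <;> ring

/-- The maximal minors of `bMat` have degree at most 6 in `b`, although their entries are
quadratic. -/
theorem totalDegree_minor5_le {R : Type*} [CommRing R] [IsDomain R] (P : Fin 6 × Fin 14 → R)
    (i : Fin 6) :
    (minor5 (fun n => C (P n)) (X 0) (X 1 : MvPolynomial (Fin 2) R) i).totalDegree ≤ 6 := by
  set M := (bMat (fun n => C (P n)) 1 (X 0) (X 1 : MvPolynomial (Fin 2) R)).submatrix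
    i.succAbove id with hM
  have hΔ : minor5 (fun n => C (P n)) (X 0) (X 1 : MvPolynomial (Fin 2) R) i = M.det := rfl
  rw [hΔ]
  by_cases h0 : M.det = 0
  · simp [h0]
  let W := restrictTotalDegree (Fin 2) R 2
  have ht (a : R) (u v : ℕ) (huv : u + v ≤ 2) :
      C a * (X 0 ^ u * X 1 ^ v) ∈ W := by
    rw [mem_restrictTotalDegree]
    refine (totalDegree_mul _ _).trans ?_
    rw [totalDegree_C, zero_add]
    refine (totalDegree_mul _ _).trans ?_
    rwa [totalDegree_X_pow, totalDegree_X_pow]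
  set E : Matrix (Fin 5) (Fin 5) (MvPolynomial (Fin 2) R) := colMat (X 0) (X 1) with hE
  have hentry (r c : Fin 5) : ((M * E) r c).totalDegree ≤ 2 := by
    rw [← mem_restrictTotalDegree, Matrix.mul_apply]
    change ∑ l, bcoef (fun j => C (P (i.succAbove r, j))) 1 (X 0) (X 1) l *
      colMat (X 0) (X 1) l c ∈ W
    rw [bcoef_mul_colMat]
    obtain ⟨p, hp⟩ : ∃ p : Fin 14 → R, p = fun j => P (i.succAbove r, j) := ⟨_, rfl⟩
    have hp' (j : Fin 14) : P (i.succAbove r, j) = p j := by rw [hp]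
    simp only [hp']
    have h2 (a : R) : (C (2 * a) : MvPolynomial (Fin 2) R) = 2 * C a := by
      rw [map_mul, map_ofNat]
    fin_cases c
    · convert W.add_mem (W.add_mem (ht (p 0) 2 0 (by norm_num)) (ht (2 * p 1) 1 1 (by norm_num)))
        (ht (p 2) 0 2 (by norm_num)) using 1
      simp [h2]
      ring
    · convert W.sub_mem (W.add_mem (W.add_mem (ht (p 1) 1 0 (by norm_num))
        (ht (p 2) 0 1 (by norm_num))) (ht (p 9) 2 0 (by norm_num)))
        (ht (p 10) 1 1 (by norm_num)) using 1
      simp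
      ring
    · convert W.add_mem (W.sub_mem (ht (p 2) 0 0 (by norm_num)) (ht (2 * p 10) 1 0 (by norm_num)))
        (ht (p 13) 2 0 (by norm_num)) using 1
      simp [h2]
    · convert W.add_mem (W.add_mem (W.add_mem (ht (p 3) 1 0 (by norm_num))
        (ht (p 4) 0 1 (by norm_num))) (W.add_mem (ht (p 5) 2 0 (by norm_num))
        (ht (p 6 + p 7) 1 1 (by norm_num)))) (ht (p 8) 0 2 (by norm_num)) using 1
      simp
      ring
    · convert W.add_mem (W.add_mem (W.add_mem (ht (p 4) 0 0 (by norm_num))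
        (ht (p 7) 1 0 (by norm_num))) (W.add_mem (ht (p 8) 0 1 (by norm_num))
        (ht (p 11) 2 0 (by norm_num)))) (ht (p 12) 1 1 (by norm_num)) using 1
      simp
      ring
  have hdet : X 0 ^ 4 * M.det = (M * E).det := by
    rw [Matrix.det_mul, hE, det_colMat, mul_comm]
  have h10 := totalDegree_det_le _ hentry
  rw [← hdet, totalDegree_mul_of_isDomain (pow_ne_zero 4 (X_ne_zero 0)) h0,
    totalDegree_X_pow] at h10
  omega

/-! ### Genericity of the relations -/

/-- A sparse integral specialization of `P`, whose maximal minors have at most two terms. -/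
def dataS : Fin 6 → Fin 14 → ℤ :=
  ![![0, 0, 0, 0, 0, 0, 0, 0, 0, 0, 0, 0, 0, 1],
    ![0, 0, 0, 0, 0, 0, 0, 0, 0, 0, 0, 1, 0, 0],
    ![0, 0, 0, 0, 0, 1, 0, 0, 0, 0, 0, 0, 1, 0],
    ![0, 0, 1, 0, 0, 0, 0, 0, 0, 1, 0, 0, 0, 0],
    ![1, 0, 0, 0, 0, 0, 0, 0, 1, 0, 0, 0, 0, 0],
    ![0, 0, 0, 0, 0, 0, 0, 0, 0, 0, 1, 0, 0, 0]]

/-- The exponents and coefficients of the maximal minors at `dataS`. -/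
def sparseTerm : Fin 6 → Fin 2 → (ℕ × ℕ) × ℤ :=
  ![![((5, 0), -2), ((3, 1), -1)], ![((1, 4), 1), ((0, 6), -1)], ![((1, 5), -1), ((0, 0), 0)],
    ![((5, 1), 1), ((0, 0), 0)], ![((3, 3), 1), ((0, 0), 0)], ![((4, 1), 1), ((6, 0), 1)]]

/-- The matrix `bMat` at the specialization `dataS`. -/
theorem bMat_dataS {S : Type*} [CommRing S] (s t : S) :
    bMat (fun n => (dataS n.1 n.2 : S)) 1 s t =
      !![t ^ 2, -(s * t), s ^ 2, 0, 0;
        0, 0, 0, -(s * t), s ^ 2;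
        0, 0, 0, s - t ^ 2, s * t;
        -(2 * t), s, 1, 0, 0;
        1, 0, 0, 0, t;
        0, t, -(2 * s), 0, 0] := by
  ext i c
  fin_cases i <;> fin_cases c <;> simp [bMat, bcoef, dataS]

theorem minor5_dataS {S : Type*} [CommRing S] (s t : S) (i : Fin 6) :
    minor5 (fun n => (dataS n.1 n.2 : S)) s t i =
      ∑ l, ((sparseTerm i l).2 : S) * (s ^ (sparseTerm i l).1.1 * t ^ (sparseTerm i l).1.2) := by
  rw [minor5, bMat_dataS, Fin.sum_univ_two]
  fin_cases i <;>
    simp [Matrix.det_succ_row_zero, Fin.sum_univ_succ, Fin.succAbove, sparseTerm] <;> ring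

/-- The minor from which the `r`-th relation is built. -/
def relMinor (r : Fin 18) : Fin 6 := Fin.divNat (m := 6) (n := 3) r

/-- The exponent of the monomial `1`, `b₁` or `b₂` by which the minor is multiplied in the `r`-th
relation. -/
def relShift (r : Fin 18) : ℕ × ℕ := ![(0, 0), (1, 0), (0, 1)] (Fin.modNat (m := 6) (n := 3) r)

/-- The `r`-th of the 18 relations: a maximal minor of `bMat`, multiplied by `1`, `b₁` or `b₂`. -/
noncomputable def relPoly {R : Type*} [CommRing R] (P : Fin 6 × Fin 14 → R) (r : Fin 18) :
    MvPolynomial (Fin 2) R :=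
  monomial (expo (relShift r)) 1 * minor5 (fun n => C (P n)) (X 0) (X 1) (relMinor r)

/-- The coefficients of the pivot monomials in the relations at `dataS`. -/
def sparseMat (r p : Fin 18) : ℤ :=
  ∑ l, if pivot p = relShift r + (sparseTerm (relMinor r) l).1 then
    (sparseTerm (relMinor r) l).2 else 0

/-- The inverse modulo 23 of `sparseMat`. -/
def sparseInv : Fin 18 → Fin 18 → ℤ :=
  ![![0, 0, 0, 0, 0, 0, 0, 0, 0, 1, 0, 0, 0, 0, 0, 0, 0, 0],
    ![0, 0, 0, 0, 0, 0, 0, 0, 0, 0, 1, 0, 0, 0, 0, 0, 0, 0],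
    ![0, 0, 0, 0, 0, 0, 0, 0, 0, 0, 0, 1, 0, 0, 0, 0, 0, 0],
    ![0, 0, 0, 0, 0, 0, 0, 0, 0, 0, 0, 0, 1, 0, 0, 0, 0, 0],
    ![0, 0, 0, 0, 0, 0, 0, 0, 0, 0, 0, 0, 0, 1, 0, 0, 0, 0],
    ![0, 0, 0, 0, 0, 0, 0, 0, 0, 0, 0, 0, 0, 0, 1, 0, 0, 0],
    ![0, 0, 0, 0, 0, 0, -1, 0, 0, 0, 0, 0, 0, 0, 0, 0, 0, 0],
    ![0, 0, 0, 0, 0, 0, 0, -1, 0, 0, 0, 0, 0, 0, 0, 0, 0, 0],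
    ![0, 0, 0, 0, 0, 0, 0, 0, -1, 0, 0, 0, 0, 0, 0, 0, 0, 0],
    ![0, 0, 0, 0, 0, 0, 0, 0, 0, -1, 0, 0, 0, 0, 0, 0, 1, 0],
    ![0, 0, 0, 0, 0, 0, 0, 0, 0, 0, -1, 0, 0, 0, 0, 0, 0, 1],
    ![0, 0, -1, 0, 0, 0, 0, 0, 0, -2, 0, 0, 0, 0, 0, 0, 0, 0],
    ![0, 0, 0, 0, 1, 0, 0, 0, -1, 0, 0, 0, 0, 0, 0, 0, 0, 0],
    ![0, 0, 0, 0, 0, -1, -1, 0, 0, 0, 0, 0, 0, 0, 0, 0, 0, 0],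
    ![0, -1, 0, 0, 0, 0, 0, 0, 0, 0, 0, 0, 0, 0, 0, -1, 0, 0],
    ![0, 1, 0, 0, 0, 0, 0, 0, 0, 0, 0, 0, 0, 0, 0, 2, 0, 0],
    ![11, 0, 0, 0, 0, 0, 0, 0, 0, 0, 0, 0, 0, 0, 0, 0, 0, 0],
    ![0, 0, 0, -1, 0, 0, 0, 0, 0, 0, 0, 0, 0, 0, 0, 0, 0, 0]]

theorem sparseMat_mod : ∀ i j, (∑ l, sparseMat i l * sparseInv l j) % (23 : ℕ) =
    if i = j then 1 else 0 := by
  decide +kernel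

theorem expo_add (a b : ℕ × ℕ) : expo (a + b) = expo a + expo b := by
  ext i
  fin_cases i <;> simp [expo]

theorem monomial_expo {R : Type*} [CommRing R] (a : ℕ × ℕ) (c : R) :
    monomial (expo a) c = C c * (X 0 ^ a.1 * X 1 ^ a.2) := by
  rw [X_pow_eq_monomial, X_pow_eq_monomial, monomial_mul, C_mul_monomial, expo]
  simp

theorem coeff_relPoly_dataS (r p : Fin 18) :
    coeff (expo (pivot p)) (relPoly (fun n => (dataS n.1 n.2 : ℝ)) r) = sparseMat r p := by
  have h1 : minor5 (fun n : Fin 6 × Fin 14 => C (dataS n.1 n.2 : ℝ)) (X 0)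
      (X 1 : MvPolynomial (Fin 2) ℝ) (relMinor r) =
      ∑ l, monomial (expo (sparseTerm (relMinor r) l).1) ((sparseTerm (relMinor r) l).2 : ℝ) := by
    have h2 := minor5_dataS (X 0) (X 1 : MvPolynomial (Fin 2) ℝ) (relMinor r)
    simp only [monomial_expo, map_intCast]
    exact h2
  rw [relPoly, h1, Finset.mul_sum, coeff_sum, sparseMat]
  push_cast
  refine Finset.sum_congr rfl fun l _ => ?_
  rw [monomial_mul, one_mul, coeff_monomial, ← expo_add]
  simp only [expo_injective.eq_iff, eq_comm]

theorem relPoly_totalDegree {R : Type*} [CommRing R] [IsDomain R] (P : Fin 6 × Fin 14 → R)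
    (r : Fin 18) : (relPoly P r).totalDegree ≤ 7 := by
  have h1 : ∀ r : Fin 18, (relShift r).1 + (relShift r).2 ≤ 1 := by decide +kernel
  refine (totalDegree_mul _ _).trans ?_
  have h2 : (monomial (expo (relShift r)) (1 : R)).totalDegree ≤ 1 := by
    rw [totalDegree_monomial _ one_ne_zero, Finsupp.sum_fintype _ _ (fun _ => rfl),
      Fin.sum_univ_two, expo_apply_zero, expo_apply_one]
    exact h1 r
  have h3 := totalDegree_minor5_le P (relMinor r)
  omega

theorem map_relPoly {R T : Type*} [CommRing R] [CommRing T] (φ : R →+* T)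
    (P : Fin 6 × Fin 14 → R) (r : Fin 18) :
    MvPolynomial.map φ (relPoly P r) = relPoly (fun n => φ (P n)) r := by
  rw [relPoly, map_mul, map_minor5, map_monomial, map_one]
  simp only [map_C, map_X]
  rfl

/-- For generic `P`, the 18 relations can be solved for the pivot monomials, since this is the case
at `dataS`. -/
theorem det_relPoly_ne_zero :
    (Matrix.of fun r p => coeff (expo (pivot p))
      (relPoly (fun n => algebraMap ParamRing ParamField (X n)) r)).det ≠ 0 := by
  let A : Matrix (Fin 18) (Fin 18) ParamRing :=
    Matrix.of fun r p => coeff (expo (pivot p)) (relPoly X r)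
  have hAe (r p : Fin 18) : A r p = coeff (expo (pivot p)) (relPoly X r) := rfl
  have hA : A.det ≠ 0 := by
    intro h0
    have : Fact (1 < 23) := ⟨by norm_num⟩
    refine det_ne_zero_of_mod 23 _ _ sparseMat_mod ?_
    let φ : ParamRing →+* ℝ := (aeval fun n => (dataS n.1 n.2 : ℝ)).toRingHom
    have h1 : (Matrix.of fun i j => (sparseMat i j : ℝ)) = φ.mapMatrix A := by
      ext r p
      rw [Matrix.of_apply, ← coeff_relPoly_dataS, RingHom.mapMatrix_apply, Matrix.map_apply,
        hAe, ← coeff_map, map_relPoly]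
      simp [φ]
    rw [h1, ← RingHom.map_det, h0, map_zero]
  have h2 : (Matrix.of fun r p => coeff (expo (pivot p))
      (relPoly (fun n => algebraMap ParamRing ParamField (X n)) r)) =
      (algebraMap ParamRing ParamField).mapMatrix A := by
    ext r p
    rw [RingHom.mapMatrix_apply, Matrix.map_apply, Matrix.of_apply, hAe, ← coeff_map,
      map_relPoly]
  rw [h2, ← RingHom.map_det]
  exact (map_ne_zero_iff _ (IsFractionRing.injective ParamRing ParamField)).2 hA

/-! ### The upper bound -/

/-- At a zero of the system, the maximal minors of `bMat` vanish, since the kernel contains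
`(1, a₁, a₂, a₃, a₄)`. -/
theorem minor5_eq_zero {A : Type*} [CommRing A] (P : Fin 6 × Fin 14 → A) (x : Fin 6 → A)
    (h : conicSys P x = 0) (i : Fin 6) : minor5 P (x 4) (x 5) i = 0 := by
  set M := (bMat P 1 (x 4) (x 5)).submatrix i.succAbove id with hM
  have hv : M.mulVec ![1, x 0, x 1, x 2, x 3] = 0 := by
    funext r
    have h1 := congrFun h (i.succAbove r)
    rw [conicSys, sum_conicVec] at h1
    exact h1
  have h2 : (M.adjugate * M).mulVec ![1, x 0, x 1, x 2, x 3] = 0 := by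
    rw [← Matrix.mulVec_mulVec, hv, Matrix.mulVec_zero]
  rw [Matrix.adjugate_mul, Matrix.smul_mulVec, Matrix.one_mulVec] at h2
  have h3 : M.det = 0 := by simpa using congrFun h2 0
  exact h3

/-- Cramer's rule: at a zero of the system, `minor4` times each `a_c` is a polynomial in `b`. -/
theorem exists_minor4_mul_eq {k A : Type*} [Field k] [CommRing A] [Algebra k A]
    (P : Fin 6 × Fin 14 → k) (x : Fin 6 → A)
    (h : conicSys (fun n => algebraMap k A (P n)) x = 0) (c : Fin 4) :
    ∃ g : MvPolynomial (Fin 2) k,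
      aeval ![x 4, x 5] g = minor4 (fun n => algebraMap k A (P n)) 1 (x 4) (x 5) *
        ![x 0, x 1, x 2, x 3] c := by
  let ψ : MvPolynomial (Fin 2) k →+* A := (aeval ![x 4, x 5]).toRingHom
  let B : Matrix (Fin 6) (Fin 5) (MvPolynomial (Fin 2) k) := bMat (fun n => C (P n)) 1 (X 0) (X 1)
  let row : Fin 4 → Fin 6 := Fin.castLE (by norm_num)
  let M := B.submatrix row Fin.succ
  have hB (i : Fin 6) (c : Fin 5) :
      ψ (B i c) = bcoef (fun j => algebraMap k A (P (i, j))) 1 (x 4) (x 5) c := by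
    have h1 : ψ (B i c) = bcoef (fun j => ψ (C (P (i, j)))) (ψ 1) (ψ (X 0)) (ψ (X 1)) c :=
      map_bcoef ψ (fun j => C (P (i, j))) 1 (X 0) (X 1) c
    rw [h1]
    simp [ψ]
  have hdet : ψ M.det = minor4 (fun n => algebraMap k A (P n)) 1 (x 4) (x 5) := by
    rw [RingHom.map_det, minor4]
    congr 1
    ext r c
    rw [RingHom.mapMatrix_apply, Matrix.map_apply, Matrix.submatrix_apply]
    exact hB (row r) c.succ
  -- The equations of the first four rows, solved for the linear part in `a`.
  have hlin (r : Fin 4) : ∑ c, ψ (M r c) * ![x 0, x 1, x 2, x 3] c = -ψ (B (row r) 0) := by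
    have h1 := congrFun h (row r)
    rw [conicSys, sum_conicVec] at h1
    simp only [Fin.sum_univ_five, ← hB] at h1
    simp only [Fin.sum_univ_four]
    simp [M] at h1 ⊢
    linear_combination h1
  refine ⟨∑ r, M.adjugate c r * -B (row r) 0, ?_⟩
  change ψ _ = _
  simp only [map_sum, map_mul, map_neg, ← hlin, Finset.mul_sum]
  rw [Finset.sum_comm]
  have h2 (l : Fin 4) : ∑ r, ψ (M.adjugate c r) * (ψ (M r l) * ![x 0, x 1, x 2, x 3] l) =
      ψ ((M.adjugate * M) c l) * ![x 0, x 1, x 2, x 3] l := by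
    rw [Matrix.mul_apply, map_sum, Finset.sum_mul]
    exact Finset.sum_congr rfl fun r _ => by rw [map_mul, mul_assoc]
  simp only [h2, Matrix.adjugate_mul, Matrix.smul_apply, Matrix.one_apply, smul_eq_mul, map_mul,
    hdet]
  rw [Finset.sum_eq_single c]
  · simp
  · intro l _ hl
    simp [hl.symm]
  · simp

/-- The upper bound on the dimension of an algebra generated by a zero `x` of the system `P·F`:
the standard monomials in `b` span it, provided the relations coming from the maximal minors can
be solved for the pivots, and the elements `δ ℓ^k` are independent. -/
theorem span_standard_eq_top {k A : Type*} [Field k] [CommRing A] [Algebra k A]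
    (P : Fin 6 × Fin 14 → k) (x : Fin 6 → A)
    (h : conicSys (fun n => algebraMap k A (P n)) x = 0)
    (hx : Function.Surjective (aeval x : MvPolynomial (Fin 6) k →ₐ[k] A))
    (hdet : (Matrix.of fun r p => coeff (expo (pivot p)) (relPoly P r)).det ≠ 0)
    (hind : LinearIndependent k fun l : Fin 18 =>
      minor4 (fun n => algebraMap k A (P n)) 1 (x 4) (x 5) * (x 4 + 3 * x 5) ^ (l : ℕ)) :
    Submodule.span k (Set.range fun q : Fin 18 =>
      x 4 ^ (standard q).1 * x 5 ^ (standard q).2) = ⊤ := by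
  set S := Submodule.span k (Set.range fun q : Fin 18 =>
      x 4 ^ (standard q).1 * x 5 ^ (standard q).2) with hS
  let ψ : MvPolynomial (Fin 2) k →ₐ[k] A := aeval ![x 4, x 5]
  set δ := minor4 (fun n => algebraMap k A (P n)) 1 (x 4) (x 5) with hδ
  have hmem (g : MvPolynomial (Fin 2) k) : ψ g ∈ S := by
    refine aeval_mem_span_standard ![x 4, x 5] (relPoly P) (relPoly_totalDegree P)
      (fun r => ?_) hdet g
    have h1 := map_minor5 (aeval ![x 4, x 5] : MvPolynomial (Fin 2) k →ₐ[k] A).toRingHom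
      (fun n => C (P n)) (X 0) (X 1) (relMinor r)
    have h2 := minor5_eq_zero _ x h (relMinor r)
    rw [relPoly, map_mul]
    simp at h1
    rw [h1, h2, mul_zero]
  have hψδ : ψ (minor4 (fun n => C (P n)) 1 (X 0) (X 1)) = δ := by
    have h1 := map_minor4 ψ.toRingHom (fun n => C (P n)) 1 (X 0) (X 1)
    simpa [ψ] using h1
  have hψℓ : ψ (X 0 + 3 * X 1) = x 4 + 3 * x 5 := by simp [ψ, map_ofNat]
  have hfinS : Module.Finite k S := by
    rw [hS]
    exact Module.Finite.span_of_finite k (Set.finite_range _)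
  -- The independent elements `δ ℓ^k` of `S` are as many as its generators, so they span `S`.
  have hspan : Submodule.span k (Set.range fun l : Fin 18 => δ * (x 4 + 3 * x 5) ^ (l : ℕ)) = S := by
    refine Submodule.eq_of_le_of_finrank_le ?_ ?_
    · rw [Submodule.span_le]
      rintro _ ⟨l, rfl⟩
      have h1 := hmem (minor4 (fun n => C (P n)) 1 (X 0) (X 1) * (X 0 + 3 * X 1) ^ (l : ℕ))
      rw [map_mul, map_pow, hψδ, hψℓ] at h1
      exact h1
    · rw [finrank_span_eq_card hind]
      exact finrank_range_le_card _
  have hone : (1 : A) ∈ S := by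
    simpa using hmem 1
  obtain ⟨c, hc⟩ := (Submodule.mem_span_range_iff_exists_fun k).1 (hspan.symm ▸ hone)
  let w : MvPolynomial (Fin 2) k := ∑ l, c l • (X 0 + 3 * X 1) ^ (l : ℕ)
  have hw : δ * ψ w = 1 := by
    rw [← hc]
    simp only [w, map_sum, map_smul, map_pow, hψℓ, Finset.mul_sum, mul_smul_comm]
  have hgen (m : Fin 6) : x m ∈ ψ.range := by
    have hα (c : Fin 4) : ![x 0, x 1, x 2, x 3] c ∈ ψ.range := by
      obtain ⟨g, hg⟩ := exists_minor4_mul_eq P x h c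
      refine ⟨w * g, ?_⟩
      change ψ (w * g) = _
      have hg' : ψ g = δ * ![x 0, x 1, x 2, x 3] c := hg
      rw [map_mul, hg', ← mul_assoc, mul_comm (ψ w), hw, one_mul]
    fin_cases m
    · exact hα 0
    · exact hα 1
    · exact hα 2
    · exact hα 3
    · exact ⟨X 0, by simp [ψ]⟩
    · exact ⟨X 1, by simp [ψ]⟩
  refine Submodule.eq_top_iff'.2 fun y => ?_
  obtain ⟨g, rfl⟩ := hx y
  have hg : aeval x g ∈ ψ.range := by
    have h1 : (aeval x g : A) ∈ Algebra.adjoin k (Set.range x) := by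
      rw [Algebra.adjoin_range_eq_range_aeval]
      exact ⟨g, rfl⟩
    refine (Algebra.adjoin_le ?_) h1
    rintro _ ⟨m, rfl⟩
    exact hgen m
  obtain ⟨g₁, hg₁⟩ := hg
  rw [← hg₁]
  exact hmem g₁

/-! ### The Hilbert function -/

theorem finrank_restrictTotalDegree (k : Type*) [Field k] (d : ℕ) :
    Module.finrank k (restrictTotalDegree (Fin 6) k d) = (6 + d).choose d := by
  have hset : {n : Fin 6 →₀ ℕ | (n.sum fun _ e => e) ≤ d} =
      ((Finset.range (d + 1)).biUnion fun m =>
        (Finset.univ : Finset (Fin 6)).finsuppAntidiag m : Finset (Fin 6 →₀ ℕ)) := by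
    ext n
    simp [Finsupp.sum_fintype]
  have hcard : ∀ d : ℕ, ∑ m ∈ Finset.range (d + 1), (6 + m - 1).choose m = (6 + d).choose d := by
    intro d
    induction d with
    | zero => rfl
    | succ d ih =>
      rw [Finset.sum_range_succ, ih, show 6 + (d + 1) - 1 = 6 + d by omega,
        show 6 + (d + 1) = (6 + d) + 1 by omega, Nat.choose_succ_succ]
  rw [restrictTotalDegree, Module.finrank_eq_nat_card_basis
    (basisRestrictSupport k {n : Fin 6 →₀ ℕ | (n.sum fun _ e => e) ≤ d}),
    Nat.card_coe_set_eq, hset, Set.ncard_coe_finset, Finset.card_biUnion]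
  · simp only [Finset.card_finsuppAntidiag_nat_eq_choose, Finset.card_univ, Fintype.card_fin]
    exact hcard d
  · intro m _ m' _ hm
    refine Finset.disjoint_left.2 fun n h₁ h₂ => hm ?_
    rw [Finset.mem_finsuppAntidiag] at h₁ h₂
    exact h₁.1.symm.trans h₂.1

/-- Rank–nullity for the residue map on polynomials of degree at most `d`: the affine Hilbert
function at `d` is the dimension of the image of those polynomials in the quotient. -/
theorem finrank_inf_add_finrank_range {k : Type*} [Field k] (I : Ideal (MvPolynomial (Fin 6) k))
    (d : ℕ) :
    Module.finrank k ↥(I.restrictScalars k ⊓ restrictTotalDegree (Fin 6) k d) +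
      Module.finrank k ((restrictTotalDegree (Fin 6) k d).map (Ideal.Quotient.mkₐ k I).toLinearMap)
      = (6 + d).choose d := by
  set W := restrictTotalDegree (Fin 6) k d with hW
  let f := (Ideal.Quotient.mkₐ k I).toLinearMap.domRestrict W
  have hker : f.ker.map W.subtype = I.restrictScalars k ⊓ W := by
    ext g
    simp [f, LinearMap.mem_ker, Ideal.Quotient.eq_zero_iff_mem]
  have h1 : Module.finrank k f.ker = Module.finrank k ↥(I.restrictScalars k ⊓ W) := by
    rw [← hker]
    exact (Submodule.finrank_map_subtype_eq W f.ker).symm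
  have h2 : f.range = W.map (Ideal.Quotient.mkₐ k I).toLinearMap :=
    LinearMap.range_domRestrict _ _
  have h3 := f.finrank_range_add_finrank_ker
  rw [h1, h2, finrank_restrictTotalDegree] at h3
  omega

theorem totalDegree_cons_le {k : Type*} [Field k] (i : Fin 7) :
    ((Fin.cons 1 X : Fin 7 → MvPolynomial (Fin 6) k) i).totalDegree ≤ 1 := by
  refine Fin.cases ?_ (fun m => ?_) i <;> simp

theorem totalDegree_basisMon_le {k : Type*} [Field k] (l : Fin 18) :
    (basisMon k l).totalDegree ≤ 2 :=
  (totalDegree_mul _ _).trans (Nat.add_le_add (totalDegree_cons_le _) (totalDegree_cons_le _))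

/-- The first seven basis monomials are `1` and the variables. -/
theorem totalDegree_basisMon_le_one {k : Type*} [Field k] (i : Fin 7) :
    (basisMon k (Fin.castLE (by norm_num) i)).totalDegree ≤ 1 := by
  have h : ∀ i : Fin 7, (basisPair (Fin.castLE (by norm_num) i)).1 = 0 := by decide
  rw [basisMon, h i, Fin.cons_zero, one_mul]
  exact totalDegree_cons_le _

/-- The Hilbert function of an ideal for which the 18 basis monomials are independent in the
quotient and the quotient is spanned by 18 elements, so that they form a basis. -/
theorem hilbert_of_basisMon {k : Type*} [Field k] (I : Ideal (MvPolynomial (Fin 6) k))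
    (hind : LinearIndependent k fun l => Ideal.Quotient.mk I (basisMon k l))
    (e : Fin 18 → MvPolynomial (Fin 6) k ⧸ I) (he : Submodule.span k (Set.range e) = ⊤) :
    (Nat.choose (6 + 1) 1 -
        Module.finrank k ↥(I.restrictScalars k ⊓ restrictTotalDegree (Fin 6) k 1) = 7) ∧
      (∀ d : ℕ, 2 ≤ d →
        Nat.choose (6 + d) d -
            Module.finrank k ↥(I.restrictScalars k ⊓ restrictTotalDegree (Fin 6) k d) = 18) ∧
      Module.finrank k (MvPolynomial (Fin 6) k ⧸ I) = 18 := by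
  have hfin : Module.Finite k (MvPolynomial (Fin 6) k ⧸ I) :=
    ⟨⟨(Set.finite_range e).toFinset, by simpa using he⟩⟩
  have hle : Module.finrank k (MvPolynomial (Fin 6) k ⧸ I) ≤ 18 := by
    rw [← finrank_top, ← he]
    exact (finrank_range_le_card e).trans (by simp)
  have hge : 18 ≤ Module.finrank k (MvPolynomial (Fin 6) k ⧸ I) := by
    simpa using hind.fintype_card_le_finrank
  have heq := le_antisymm hle hge
  have htop : Submodule.span k (Set.range fun l => Ideal.Quotient.mk I (basisMon k l)) = ⊤ :=
    hind.span_eq_top_of_card_eq_finrank (by simp [heq])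
  refine ⟨?_, fun d hd => ?_, heq⟩
  · have h := finrank_inf_add_finrank_range I 1
    -- The independent classes of `1` and the six variables lie in the image.
    have hsub : Submodule.span k (Set.range fun i : Fin 7 =>
        Ideal.Quotient.mk I (basisMon k (Fin.castLE (by norm_num) i))) ≤
        (restrictTotalDegree (Fin 6) k 1).map (Ideal.Quotient.mkₐ k I).toLinearMap := by
      rw [Submodule.span_le]
      rintro _ ⟨i, rfl⟩
      exact ⟨_, (mem_restrictTotalDegree _ _ _).2 (totalDegree_basisMon_le_one i), rfl⟩
    have h7 := Submodule.finrank_mono hsub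
    have hind' := hind.comp (Fin.castLE (by norm_num) : Fin 7 → Fin 18) (Fin.castLE_injective _)
    have hc := finrank_span_eq_card hind'
    simp only [Function.comp_def, Fintype.card_fin] at hc
    rw [hc] at h7
    simp only [Nat.choose_one_right] at h ⊢
    omega
  · have h := finrank_inf_add_finrank_range I d
    have hmap : (restrictTotalDegree (Fin 6) k d).map (Ideal.Quotient.mkₐ k I).toLinearMap = ⊤ := by
      rw [eq_top_iff, ← htop, Submodule.span_le]
      rintro _ ⟨l, rfl⟩
      exact ⟨_, (mem_restrictTotalDegree _ _ _).2 ((totalDegree_basisMon_le l).trans hd), rfl⟩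
    rw [hmap, finrank_top, heq] at h
    omega

/-- `span_standard_eq_top` for the coordinate ring of an ideal containing the entries of `P·F`. -/
theorem span_standard_quotient {k : Type*} [Field k] (I : Ideal (MvPolynomial (Fin 6) k))
    (P : Fin 6 × Fin 14 → k) (hI : ∀ i, conicSys (fun n => C (P n)) X i ∈ I)
    (hdet : (Matrix.of fun r p => coeff (expo (pivot p)) (relPoly P r)).det ≠ 0)
    (hind : LinearIndependent k fun l : Fin 18 => Ideal.Quotient.mk I
      (minor4 (fun n => C (P n)) 1 (X 4) (X 5) * (X 4 + 3 * X 5) ^ (l : ℕ))) :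
    ∃ e : Fin 18 → MvPolynomial (Fin 6) k ⧸ I, Submodule.span k (Set.range e) = ⊤ := by
  refine ⟨_, span_standard_eq_top P (fun m => Ideal.Quotient.mk I (X m)) ?_ ?_ hdet ?_⟩
  · funext i
    have h := Ideal.Quotient.eq_zero_iff_mem.2 (hI i)
    simp only [conicSys, map_sum, map_mul, map_conicVec] at h
    exact h
  · intro y
    obtain ⟨g, rfl⟩ := Ideal.Quotient.mk_surjective y
    refine ⟨g, ?_⟩
    have h : (aeval fun m => Ideal.Quotient.mk I (X m)) = Ideal.Quotient.mkₐ k I :=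
      MvPolynomial.algHom_ext fun m => by simp
    rw [h]
    rfl
  · simp only [map_mul, map_minor4, map_pow, map_add, map_one, map_ofNat] at hind
    exact hind

/-- Section 3.3 of the paper.  For the ideal `I` generated by the six
entries of `P·F` over `𝔎`, one has `HF_I(1) = 7` and `HF_I(d) = 18` for all `d ≥ 2`; in
particular `dim_𝔎(𝔎[a,b]/I) = 18`. -/
theorem conic_hilbert_function :
    (Nat.choose (6 + 1) 1 -
        Module.finrank ParamField
          ↥(conicIdeal.restrictScalars ParamField ⊓
            restrictTotalDegree (Fin 6) ParamField 1) = 7) ∧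
      (∀ d : ℕ, 2 ≤ d →
        Nat.choose (6 + d) d -
            Module.finrank ParamField
              ↥(conicIdeal.restrictScalars ParamField ⊓
                restrictTotalDegree (Fin 6) ParamField d) = 18) ∧
      Module.finrank ParamField (MvPolynomial (Fin 6) ParamField ⧸ conicIdeal) = 18 := by
  obtain ⟨e, he⟩ := span_standard_quotient conicIdeal
    (fun n => algebraMap ParamRing ParamField (X n))
    (fun i => Ideal.subset_span ⟨i, rfl⟩) det_relPoly_ne_zero minor4_mul_pow_linearIndependent
  exact hilbert_of_basisMon conicIdeal basisMon_linearIndependent e he
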